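/- (Theorem 5.1, analytic form.) Let $\kappa_1>1$, let $\Omega\subseteq\mathbb{R}^2$ be open and simply connected, let $S:\Omega\to\mathbb{R}^2$ be $C^1$, and let $C<0$ be a constant with $\sqrt{\kappa_1^2-1}\,|Sx| < |C|$ for all $x\in\Omega$. Then there exists a $C^2$ function $u:\Omega\to\mathbb{R}$ satisfying $\dfrac{\nabla u(x)}{\sqrt{\kappa_1^2+(\kappa_1^2-1)|\nabla u(x)|^2}} = \dfrac{Sx}{C}$ on $\Omega$ if and only if $\big(C^2-(\kappa_1^2-1)|Sx|^2\big)\,\mathrm{curl}\,S(x) = \dfrac{\kappa_1^2-1}{2}\,\big(S\times \nabla(|S|^2)\big)(x)$ for all $x\in\Omega$. -/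

import Mathlib

noncomputable section

/-- Euclidean inner product in `ℝ³`. -/
def dot3 (x y : Fin 3 → ℝ) : ℝ := x 0 * y 0 + x 1 * y 1 + x 2 * y 2

/-- Euclidean norm in `ℝ³`. -/
def norm3 (x : Fin 3 → ℝ) : ℝ := Real.sqrt (dot3 x x)

/-- Euclidean inner product in `ℝ²`. -/
def dot2 (x y : Fin 2 → ℝ) : ℝ := x 0 * y 0 + x 1 * y 1

/-- Euclidean norm in `ℝ²`. -/
def norm2 (x : Fin 2 → ℝ) : ℝ := Real.sqrt (dot2 x x)

/-- The embedding `x = (x₁,x₂) ↦ (x₁,x₂,0)` of the source plane into `ℝ³`. -/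
def lift2 (x : Fin 2 → ℝ) : Fin 3 → ℝ := ![x 0, x 1, 0]

/-- Cross product in `ℝ³`. -/
def cross3 (x y : Fin 3 → ℝ) : Fin 3 → ℝ :=
  ![x 1 * y 2 - x 2 * y 1, x 2 * y 0 - x 0 * y 2, x 0 * y 1 - x 1 * y 0]

/-- Partial derivative `∂f/∂xᵢ` of a scalar function on `ℝ²`. -/
def pd (i : Fin 2) (f : (Fin 2 → ℝ) → ℝ) (x : Fin 2 → ℝ) : ℝ :=
  fderiv ℝ f x (Pi.single i 1)

/-- Gradient of a scalar function on `ℝ²`. -/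
def grad2 (f : (Fin 2 → ℝ) → ℝ) (x : Fin 2 → ℝ) : Fin 2 → ℝ :=
  ![pd 0 f x, pd 1 f x]

/-- Two-dimensional curl of a plane field: `curl V = ∂V₂/∂x₁ - ∂V₁/∂x₂`. -/
def curl2 (V : (Fin 2 → ℝ) → (Fin 2 → ℝ)) (x : Fin 2 → ℝ) : ℝ :=
  pd 0 (fun y => V y 1) x - pd 1 (fun y => V y 0) x

/-- Two-dimensional cross product `a × b = a₁b₂ - a₂b₁`. -/
def cross2v (a b : Fin 2 → ℝ) : ℝ := a 0 * b 1 - a 1 * b 0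

end

/-
The radial map `p ↦ p / √(a + k|p|²)` sends `{p | 0 < a + k|p|²}` bijectively onto
`{q | k|q|² < 1}`, with inverse `q ↦ √(a / (1 - k|q|²)) q`, so the equation prescribes
`∇u = g(|S|²) S` for an explicit function `g`. By the product rule and
`g'(t) / g(t) = k / (2 (C² - k t))`, the curl of the right-hand side is `g(|S|²) ≠ 0` times
`curl S - k / (2 (C² - k|S|²)) S × ∇|S|²`. It remains to integrate a curl-free field on a simply
connected domain: it has local primitives, which differ by locally constant functions and hence
are the coordinates of a covering space; a global section of that covering is a primitive.
-/

open Filter Topology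

section Gluing

variable {X G ι : Type*} [TopologicalSpace X] [AddGroup G] {U : ι → Set X} {f : ι → X → G}

/-- The bundle over `X` with discrete fibre `G` whose sections are the functions `u : X → G` that
differ from each `f i` by a locally constant function on `U i`; in the chart `U i` the fibre
coordinate of such a section is `u - f i`. -/
def gluingCore [TopologicalSpace G] [DiscreteTopology G] (hU : ∀ i, IsOpen (U i))
    (indexAt : X → ι) (mem_indexAt : ∀ x, x ∈ U (indexAt x))
    (hf : ∀ i j, ∀ x ∈ U i ∩ U j, EventuallyConst (f i - f j) (𝓝 x)) :
    FiberBundleCore ι X G where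
  baseSet := U
  isOpen_baseSet := hU
  indexAt := indexAt
  mem_baseSet_at := mem_indexAt
  coordChange i j x v := v + (f i x - f j x)
  coordChange_self _ _ _ _ := by simp
  continuousOn_coordChange i j := by
    rintro ⟨x, v⟩ ⟨hx, -⟩
    obtain ⟨c, hc⟩ := eventuallyConst_iff_exists_eventuallyEq.1 (hf i j x hx)
    have hcont : Continuous fun p : X × G => p.2 + c :=
      (continuous_of_discreteTopology (f := fun v : G => v + c)).comp continuous_snd
    refine (hcont.continuousAt.congr ?_).continuousWithinAt
    filter_upwards [continuous_fst.continuousAt.eventually hc] with p hp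
    exact congrArg (p.2 + ·) hp.symm
  coordChange_comp _ _ _ _ _ _ := by rw [add_assoc, sub_add_sub_cancel]

theorem exists_forall_eventuallyConst_sub [SimplyConnectedSpace X] [LocallyPathConnectedSpace X]
    (hU : ∀ i, IsOpen (U i)) (hcover : ∀ x, ∃ i, x ∈ U i)
    (hf : ∀ i j, ∀ x ∈ U i ∩ U j, EventuallyConst (f i - f j) (𝓝 x)) :
    ∃ u : X → G, ∀ i, ∀ x ∈ U i, EventuallyConst (u - f i) (𝓝 x) := by
  let _ : TopologicalSpace G := ⊥
  have : DiscreteTopology G := ⟨rfl⟩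
  choose indexAt mem_indexAt using hcover
  let Z := gluingCore hU indexAt mem_indexAt hf
  have hcov : IsCoveringMap Z.proj := FiberBundle.isCoveringMap (F := G) (E := Z.Fiber)
  obtain ⟨x₀⟩ : Nonempty X := inferInstance
  obtain ⟨s, ⟨-, hs⟩, -⟩ :=
    hcov.existsUnique_continuousMap_lifts (.id X) x₀ ⟨x₀, (0 : G)⟩ rfl
  have hs_fst (x : X) : (s x).1 = x := congrFun hs x
  let fiberCoord (x : X) : G := (s x).2
  let u (x : X) : G := fiberCoord x + f (indexAt x) x
  have hcoord (i : ι) : u - f i = fun x => (Z.localTriv i (s x)).2 := by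
    ext x
    simp only [Pi.sub_apply, u, Z.localTriv_apply, hs_fst]
    exact add_sub_assoc _ _ _
  refine ⟨u, fun i x hx => .of_tendsto (x := (u - f i) x) ?_⟩
  rw [← nhds_discrete, hcoord]
  refine (continuous_snd.continuousAt.comp <| (Z.localTriv i).continuousAt ?_).comp
    s.continuous.continuousAt
  rw [Z.mem_localTriv_source, hs_fst]
  exact hx

end Gluing

section Primitive

variable {𝕜 E F : Type*} [RCLike 𝕜] [NormedAddCommGroup E] [NormedSpace 𝕜 E]
  [NormedAddCommGroup F] [NormedSpace 𝕜 F] {Ω : Set E} {ω : E → E →L[𝕜] F}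

theorem eventuallyConst_sub_of_hasFDerivAt {f g : E → F} {x : E}
    (hf : ∀ᶠ y in 𝓝 x, HasFDerivAt f (ω y) y) (hg : ∀ᶠ y in 𝓝 x, HasFDerivAt g (ω y) y) :
    EventuallyConst (f - g) (𝓝 x) := by
  obtain ⟨r, hr, hball⟩ := Metric.eventually_nhds_iff_ball.1 (hf.and hg)
  have hderiv : ∀ y ∈ Metric.ball x r, HasFDerivAt (f - g) (0 : E →L[𝕜] F) y := fun y hy => by
    simpa using (hball y hy).1.sub (hball y hy).2
  have : NormedSpace ℝ E := .restrictScalars ℝ 𝕜 E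
  obtain ⟨c, hc⟩ := Metric.isOpen_ball.exists_is_const_of_fderiv_eq_zero
    (convex_ball x r).isPreconnected
    (fun y hy => (hderiv y hy).differentiableAt.differentiableWithinAt)
    (fun y hy => (hderiv y hy).fderiv)
  exact eventuallyConst_iff_exists_eventuallyEq.2
    ⟨c, eventually_of_mem (Metric.ball_mem_nhds x hr) hc⟩

theorem hasFDerivAt_of_eventuallyConst_sub {f u : E → F} {f' : E →L[𝕜] F} {x : E}
    (hf : HasFDerivAt f f' x) (hu : EventuallyConst (u - f) (𝓝 x)) : HasFDerivAt u f' x := by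
  obtain ⟨c, hc⟩ := eventuallyConst_iff_exists_eventuallyEq.1 hu
  refine (hf.const_add c).congr_of_eventuallyEq (hc.mono fun y hy => ?_)
  exact sub_eq_iff_eq_add.1 hy

theorem exists_forall_hasFDerivAt_of_locally (hΩ : IsOpen Ω) [SimplyConnectedSpace Ω]
    (hloc : ∀ x ∈ Ω, ∃ f : E → F, ∀ᶠ y in 𝓝 x, HasFDerivAt f (ω y) y) :
    ∃ u : E → F, ∀ x ∈ Ω, HasFDerivAt u (ω x) x := by
  have : NormedSpace ℝ E := .restrictScalars ℝ 𝕜 E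
  have := hΩ.locallyPathConnectedSpace
  have hnhds (x : Ω) : map Subtype.val (𝓝 x) = 𝓝 (x : E) := map_nhds_subtype_coe_eq_nhds
    x.2 (hΩ.mem_nhds x.2)
  choose f hf using fun x : Ω => hloc x x.2
  let U (i : Ω) : Set Ω := {x | ∀ᶠ y in 𝓝 (x : E), HasFDerivAt (f i) (ω y) y}
  obtain ⟨u, hu⟩ := exists_forall_eventuallyConst_sub (U := U) (f := fun i x => f i x)
    (fun i => isOpen_setOfPred_eventually_nhds.preimage continuous_subtype_val)
    (fun x => ⟨x, hf x⟩)
    (fun i j x hx =>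
      (eventuallyConst_sub_of_hasFDerivAt hx.1 hx.2).comp_tendsto
        continuous_subtype_val.continuousAt)
  refine ⟨Function.extend Subtype.val u 0, fun x hx => ?_⟩
  refine hasFDerivAt_of_eventuallyConst_sub (hf ⟨x, hx⟩).self_of_nhds ?_
  have hextend : (Function.extend Subtype.val u 0 - f ⟨x, hx⟩) ∘ Subtype.val
      = u - fun y : Ω => f ⟨x, hx⟩ y := by
    ext y
    simp
  rw [EventuallyConst, ← hnhds ⟨x, hx⟩, map_map, hextend]
  exact hu ⟨x, hx⟩ ⟨x, hx⟩ (hf ⟨x, hx⟩)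

variable [NormedSpace ℝ E] [NormedSpace ℝ F] [CompleteSpace F]

theorem exists_forall_hasFDerivAt_of_fderiv_symmetric (hΩ : IsOpen Ω) [SimplyConnectedSpace Ω]
    (hω : DifferentiableOn ℝ ω Ω) (hsymm : ∀ x ∈ Ω, ∀ v w, fderiv ℝ ω x v w = fderiv ℝ ω x w v) :
    ∃ u : E → F, ∀ x ∈ Ω, HasFDerivAt u (ω x) x := by
  refine exists_forall_hasFDerivAt_of_locally hΩ fun x hx => ?_
  obtain ⟨r, hr, hball⟩ := Metric.isOpen_iff.1 hΩ x hx
  obtain ⟨f, hf⟩ := (convex_ball x r).exists_forall_hasFDerivAt_of_fderiv_symmetric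
    Metric.isOpen_ball (hω.mono hball) fun a ha => hsymm a (hball ha)
  exact ⟨f, eventually_of_mem (Metric.ball_mem_nhds x hr) hf⟩

end Primitive

section PlaneCalculus

variable {f : (Fin 2 → ℝ) → ℝ} {V W : (Fin 2 → ℝ) → (Fin 2 → ℝ)} {x : Fin 2 → ℝ}
  {Ω : Set (Fin 2 → ℝ)}

theorem clm_apply_fin_two {F : Type*} [NormedAddCommGroup F] [NormedSpace ℝ F]
    (L : (Fin 2 → ℝ) →L[ℝ] F) (v : Fin 2 → ℝ) :
    L v = v 0 • L (Pi.single 0 1) + v 1 • L (Pi.single 1 1) := by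
  rw [← map_smul, ← map_smul, ← map_add]
  congr 1
  ext i
  fin_cases i <;> simp

/-- The 1-form `v₁ dx₁ + v₂ dx₂` with constant coefficients `v`. -/
noncomputable def oneForm : (Fin 2 → ℝ) ≃L[ℝ] (Fin 2 → ℝ) →L[ℝ] ℝ :=
  (ContinuousLinearEquiv.piRing (𝕜 := ℝ) (E := ℝ) (Fin 2)).symm

theorem oneForm_apply (v w : Fin 2 → ℝ) : oneForm v w = w 0 * v 0 + w 1 * v 1 := by
  have hsingle (i : Fin 2) : oneForm v (Pi.single i 1) = v i :=
    congrFun ((ContinuousLinearEquiv.piRing (𝕜 := ℝ) (E := ℝ) (Fin 2)).apply_symm_apply v) i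
  simp [clm_apply_fin_two (oneForm v) w, hsingle]

theorem oneForm_grad2 (f : (Fin 2 → ℝ) → ℝ) (x : Fin 2 → ℝ) :
    oneForm (grad2 f x) = fderiv ℝ f x := by
  rw [oneForm, ContinuousLinearEquiv.symm_apply_eq]
  ext i
  fin_cases i <;> rfl

theorem grad2_comp {g : ℝ → ℝ} {g' : ℝ} (hg : HasDerivAt g g' (f x))
    (hf : DifferentiableAt ℝ f x) : grad2 (fun y => g (f y)) x = g' • grad2 f x := by
  ext i
  have hcomp := hg.comp_hasFDerivAt x hf.hasFDerivAt
  fin_cases i <;> simp [grad2, pd, ← Function.comp_def g f, hcomp.fderiv]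

theorem curl2_smul (hf : DifferentiableAt ℝ f x) (hV : DifferentiableAt ℝ V x) :
    curl2 (fun y => f y • V y) x = f x * curl2 V x - cross2v (V x) (grad2 f x) := by
  have hpd (i j : Fin 2) : pd i (fun y => f y * V y j) x
      = f x * pd i (fun y => V y j) x + V x j * pd i f x := by
    simp [pd, fderiv_fun_mul hf (differentiableAt_pi.1 hV j)]
  simp only [curl2, Pi.smul_apply, smul_eq_mul, hpd, cross2v, grad2, Matrix.cons_val_zero,
    Matrix.cons_val_one]
  ring

theorem curl2_congr (h : V =ᶠ[𝓝 x] W) : curl2 V x = curl2 W x := by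
  have hcoord (i : Fin 2) : (fun y => V y i) =ᶠ[𝓝 x] fun y => W y i := h.fun_comp (· i)
  simp only [curl2, pd, (hcoord _).fderiv_eq]

theorem fderiv_oneForm_comp_symmetric_iff (hV : DifferentiableAt ℝ V x) :
    (∀ v w, fderiv ℝ (oneForm ∘ V) x v w = fderiv ℝ (oneForm ∘ V) x w v) ↔ curl2 V x = 0 := by
  have hpd (i j : Fin 2) : fderiv ℝ V x (Pi.single i 1) j = pd i (fun y => V y j) x := by
    rw [pd, (hasFDerivAt_pi'.1 hV.hasFDerivAt j).fderiv]
    rfl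
  have hfderiv (v w : Fin 2 → ℝ) : fderiv ℝ (oneForm ∘ V) x v w
      = w 0 * fderiv ℝ V x v 0 + w 1 * fderiv ℝ V x v 1 := by
    rw [oneForm.comp_fderiv]
    exact oneForm_apply _ _
  have hanti (v w : Fin 2 → ℝ) : fderiv ℝ (oneForm ∘ V) x v w - fderiv ℝ (oneForm ∘ V) x w v
      = cross2v v w * curl2 V x := by
    simp only [hfderiv, clm_apply_fin_two (fderiv ℝ V x) v, clm_apply_fin_two (fderiv ℝ V x) w,
      Pi.add_apply, Pi.smul_apply, smul_eq_mul, hpd, cross2v, curl2]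
    ring
  refine ⟨fun h => ?_, fun h v w => sub_eq_zero.1 (by rw [hanti, h, mul_zero])⟩
  simpa [cross2v, h] using (hanti (Pi.single 0 1) (Pi.single 1 1)).symm

theorem curl2_grad2 (hf : ContDiffAt ℝ 2 f x) : curl2 (grad2 f) x = 0 := by
  have hfderiv : DifferentiableAt ℝ (fderiv ℝ f) x :=
    (hf.fderiv_right (m := 1) (by norm_num)).differentiableAt one_ne_zero
  have hcomp : oneForm ∘ grad2 f = fderiv ℝ f := funext (oneForm_grad2 f)
  have hgrad : DifferentiableAt ℝ (grad2 f) x := by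
    rwa [← oneForm.comp_differentiableAt_iff, hcomp]
  rw [← fderiv_oneForm_comp_symmetric_iff hgrad, hcomp]
  exact hf.isSymmSndFDerivAt (by simp)

theorem exists_contDiffOn_grad2_eq_iff (hΩ : IsOpen Ω) [SimplyConnectedSpace Ω]
    (hV : ContDiffOn ℝ 1 V Ω) :
    (∃ u : (Fin 2 → ℝ) → ℝ, ContDiffOn ℝ 2 u Ω ∧ ∀ x ∈ Ω, grad2 u x = V x) ↔
      ∀ x ∈ Ω, curl2 V x = 0 := by
  constructor
  · rintro ⟨u, hu, hgrad⟩ x hx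
    rw [← curl2_grad2 (hu.contDiffAt (hΩ.mem_nhds hx))]
    exact curl2_congr (eventually_of_mem (hΩ.mem_nhds hx) fun y hy => (hgrad y hy).symm)
  · intro hcurl
    have hω : ContDiffOn ℝ 1 (oneForm ∘ V) Ω := oneForm.contDiff.comp_contDiffOn hV
    obtain ⟨u, hu⟩ := exists_forall_hasFDerivAt_of_fderiv_symmetric hΩ
      (hω.differentiableOn one_ne_zero) fun x hx => (fderiv_oneForm_comp_symmetric_iff <|
        (hV.differentiableOn one_ne_zero).differentiableAt (hΩ.mem_nhds hx)).2 (hcurl x hx)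
    refine ⟨u, ?_, fun x hx => oneForm.injective ?_⟩
    · rw [← one_add_one_eq_two (R := WithTop ℕ∞), contDiffOn_succ_iff_fderiv_of_isOpen hΩ]
      exact ⟨fun x hx => (hu x hx).differentiableAt.differentiableWithinAt, by simp,
        hω.congr fun x hx => (hu x hx).fderiv⟩
    · rw [oneForm_grad2, (hu x hx).fderiv, Function.comp_apply]

end PlaneCalculus

section RadialInverse

theorem inv_sqrt_smul_eq_iff {E : Type*} [SeminormedAddCommGroup E] [NormedSpace ℝ E] {a k : ℝ}
    (ha : 0 < a) {p q : E} :
    (0 < a + k * ‖p‖ ^ 2 ∧ (√(a + k * ‖p‖ ^ 2))⁻¹ • p = q) ↔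
      k * ‖q‖ ^ 2 < 1 ∧ p = √(a / (1 - k * ‖q‖ ^ 2)) • q := by
  constructor
  · rintro ⟨hp, rfl⟩
    set A := √(a + k * ‖p‖ ^ 2)
    have hA_pos : 0 < A := Real.sqrt_pos.2 hp
    have hA_sq : A ^ 2 = a + k * ‖p‖ ^ 2 := Real.sq_sqrt hp.le
    have hdenom : 1 - k * ‖A⁻¹ • p‖ ^ 2 = a / A ^ 2 := by
      rw [norm_smul, mul_pow, Real.norm_eq_abs, sq_abs]
      field_simp
      linarith
    refine ⟨sub_pos.1 (hdenom ▸ by positivity), ?_⟩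
    rw [hdenom, div_div_cancel₀ ha.ne', Real.sqrt_sq hA_pos.le, smul_inv_smul₀ hA_pos.ne']
  · rintro ⟨hq, rfl⟩
    have hdenom : 0 < 1 - k * ‖q‖ ^ 2 := sub_pos.2 hq
    set r := √(a / (1 - k * ‖q‖ ^ 2))
    have hr_pos : 0 < r := Real.sqrt_pos.2 (by positivity)
    have hradicand : a + k * ‖r • q‖ ^ 2 = r ^ 2 := by
      have hr_sq : r ^ 2 * (1 - k * ‖q‖ ^ 2) = a := by
        rw [Real.sq_sqrt (by positivity), div_mul_cancel₀ _ hdenom.ne']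
      rw [norm_smul, mul_pow, Real.norm_eq_abs, sq_abs]
      linarith
    rw [hradicand, Real.sqrt_sq hr_pos.le, inv_smul_smul₀ hr_pos.ne']
    exact ⟨by positivity, rfl⟩

theorem norm2_eq_norm_toLp (x : Fin 2 → ℝ) : norm2 x = ‖WithLp.toLp 2 x‖ := by
  simp [norm2, dot2, EuclideanSpace.norm_eq, sq]

theorem contDiff_norm2_sq {n : WithTop ℕ∞} : ContDiff ℝ n fun x => norm2 x ^ 2 := by
  simp only [norm2_eq_norm_toLp]
  exact (contDiff_norm_sq ℝ).comp PiLp.contDiff_toLp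

/-- The factor `g` for which the solutions of `∇u / √(a + k|∇u|²) = S / C` have gradient
`g(|S|²) S`. -/
noncomputable def slopeFactor (a k C t : ℝ) : ℝ :=
  √(a * C ^ 2 / (C ^ 2 - k * t)) / C

variable {a k C t : ℝ}

theorem inv_sqrt_norm2_smul_eq_iff (ha : 0 < a) (hC : C ≠ 0) {p s : Fin 2 → ℝ}
    (hs : k * norm2 s ^ 2 < C ^ 2) :
    (0 < a + k * norm2 p ^ 2 ∧ (√(a + k * norm2 p ^ 2))⁻¹ • p = C⁻¹ • s) ↔
      p = slopeFactor a k C (norm2 s ^ 2) • s := by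
  have hnorm : ‖WithLp.toLp 2 (C⁻¹ • s)‖ ^ 2 = norm2 s ^ 2 / C ^ 2 := by
    rw [WithLp.toLp_smul, norm_smul, mul_pow, norm2_eq_norm_toLp, Real.norm_eq_abs, sq_abs]
    field_simp
  have hlt : k * (norm2 s ^ 2 / C ^ 2) < 1 := by
    rwa [← mul_div_assoc, div_lt_one (by positivity)]
  have hfactor : √(a / (1 - k * (norm2 s ^ 2 / C ^ 2))) * C⁻¹
      = slopeFactor a k C (norm2 s ^ 2) := by
    rw [slopeFactor, div_eq_mul_inv]
    congr 2
    field_simp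
  have h := inv_sqrt_smul_eq_iff ha (k := k) (p := WithLp.toLp 2 p) (q := WithLp.toLp 2 (C⁻¹ • s))
  rw [hnorm, and_iff_right hlt, ← WithLp.toLp_smul, ← WithLp.toLp_smul, smul_smul, hfactor,
    (WithLp.toLp_injective 2).eq_iff, (WithLp.toLp_injective 2).eq_iff,
    ← norm2_eq_norm_toLp] at h
  exact h

theorem slopeFactor_ne_zero (ha : 0 < a) (hC : C ≠ 0) (ht : k * t < C ^ 2) :
    slopeFactor a k C t ≠ 0 := by
  have : 0 < C ^ 2 - k * t := sub_pos.2 ht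
  exact div_ne_zero (Real.sqrt_ne_zero'.2 (by positivity)) hC

theorem hasDerivAt_slopeFactor (ha : 0 < a) (hC : C ≠ 0) (ht : k * t < C ^ 2) :
    HasDerivAt (slopeFactor a k C) (slopeFactor a k C t * (k / (2 * (C ^ 2 - k * t)))) t := by
  have hD : 0 < C ^ 2 - k * t := sub_pos.2 ht
  have hradicand : HasDerivAt (fun t => a * C ^ 2 / (C ^ 2 - k * t))
      (a * C ^ 2 / (C ^ 2 - k * t) * (k / (C ^ 2 - k * t))) t := by
    convert! (((hasDerivAt_id t).const_mul k).const_sub (C ^ 2)).fun_inv hD.ne'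
      |>.const_mul (a * C ^ 2) using 1
    simp only [mul_one, neg_neg, id_eq]
    field_simp
  convert! (hradicand.sqrt (by positivity)).div_const C using 1
  rw [slopeFactor]
  field_simp
  rw [Real.sq_sqrt (by positivity)]
  field_simp

theorem contDiffAt_slopeFactor {n : WithTop ℕ∞} (ha : 0 < a) (hC : C ≠ 0) (ht : k * t < C ^ 2) :
    ContDiffAt ℝ n (slopeFactor a k C) t := by
  have hD : 0 < C ^ 2 - k * t := sub_pos.2 ht
  have hradicand : ContDiffAt ℝ n (fun t => a * C ^ 2 / (C ^ 2 - k * t)) t :=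
    contDiffAt_const.fun_div (contDiffAt_const.sub (contDiffAt_const.mul contDiffAt_id)) hD.ne'
  exact (hradicand.sqrt (by positivity)).div_const C

theorem curl2_slopeFactor_smul_eq_zero_iff (ha : 0 < a) (hC : C ≠ 0)
    {S : (Fin 2 → ℝ) → (Fin 2 → ℝ)} {x : Fin 2 → ℝ} (hS : DifferentiableAt ℝ S x)
    (hx : k * norm2 (S x) ^ 2 < C ^ 2) :
    curl2 (fun y => slopeFactor a k C (norm2 (S y) ^ 2) • S y) x = 0 ↔
      (C ^ 2 - k * norm2 (S x) ^ 2) * curl2 S x =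
        k / 2 * cross2v (S x) (grad2 (fun y => norm2 (S y) ^ 2) x) := by
  have hnorm : DifferentiableAt ℝ (fun y => norm2 (S y) ^ 2) x :=
    ((contDiff_norm2_sq (n := 1)).differentiable one_ne_zero).differentiableAt.comp x hS
  have hfactor := hasDerivAt_slopeFactor ha hC hx
  have hcurl : curl2 (fun y => slopeFactor a k C (norm2 (S y) ^ 2) • S y) x
      = slopeFactor a k C (norm2 (S x) ^ 2) * (curl2 S x - k / (2 * (C ^ 2 - k * norm2 (S x) ^ 2))
        * cross2v (S x) (grad2 (fun y => norm2 (S y) ^ 2) x)) := by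
    have hfactor_comp : DifferentiableAt ℝ (fun y => slopeFactor a k C (norm2 (S y) ^ 2)) x :=
      DifferentiableAt.comp (g := slopeFactor a k C) x hfactor.differentiableAt hnorm
    rw [curl2_smul hfactor_comp hS, grad2_comp hfactor hnorm]
    simp only [cross2v, Pi.smul_apply, smul_eq_mul]
    ring
  have hD : C ^ 2 - k * norm2 (S x) ^ 2 ≠ 0 := (sub_pos.2 hx).ne'
  rw [hcurl, mul_eq_zero, or_iff_right (slopeFactor_ne_zero ha hC hx), sub_eq_zero]
  field_simp

end RadialInverse

/-- For `k < 0`, the positivity clause excludes gradients at which `√` takes its junk value `0`. -/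
theorem imaging_same_index_general {a k C : ℝ} (ha : 0 < a) (hC : C ≠ 0) {Ω : Set (Fin 2 → ℝ)}
    (hΩ : IsOpen Ω) [SimplyConnectedSpace Ω] {S : (Fin 2 → ℝ) → (Fin 2 → ℝ)}
    (hS : ContDiffOn ℝ 1 S Ω) (hbound : ∀ x ∈ Ω, k * norm2 (S x) ^ 2 < C ^ 2) :
    (∃ u : (Fin 2 → ℝ) → ℝ, ContDiffOn ℝ 2 u Ω ∧
        ∀ x ∈ Ω, 0 < a + k * norm2 (grad2 u x) ^ 2 ∧
          (√(a + k * norm2 (grad2 u x) ^ 2))⁻¹ • grad2 u x = C⁻¹ • S x) ↔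
      ∀ x ∈ Ω, (C ^ 2 - k * norm2 (S x) ^ 2) * curl2 S x =
        k / 2 * cross2v (S x) (grad2 (fun y => norm2 (S y) ^ 2) x) := by
  have hV : ContDiffOn ℝ 1 (fun y => slopeFactor a k C (norm2 (S y) ^ 2) • S y) Ω := by
    refine ContDiffOn.fun_smul (fun x hx => ?_) hS
    exact (contDiffAt_slopeFactor ha hC (hbound x hx)).comp_contDiffWithinAt x
      ((contDiff_norm2_sq.comp_contDiffOn hS) x hx)
  rw [forall₂_congr fun x hx => (curl2_slopeFactor_smul_eq_zero_iff ha hC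
      ((hS.differentiableOn one_ne_zero).differentiableAt (hΩ.mem_nhds hx)) (hbound x hx)).symm,
    ← exists_contDiffOn_grad2_eq_iff hΩ hV]
  exact exists_congr fun u => and_congr_right' <| forall₂_congr fun x hx =>
    inv_sqrt_norm2_smul_eq_iff ha hC (hbound x hx)

/-- Theorem 5.1, analytic form. A `C²` solution `u` of
`∇u/√(κ₁² + (κ₁²-1)|∇u|²) = S/C` exists on the simply connected domain `Ω` iff `S`
satisfies the compatibility condition (5.10). -/
theorem imaging_same_index (κ1 C : ℝ) (hκ1 : 1 < κ1) (hC : C < 0)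
    (Ω : Set (Fin 2 → ℝ)) (hΩ : IsOpen Ω) (hsc : SimplyConnectedSpace Ω)
    (S : (Fin 2 → ℝ) → (Fin 2 → ℝ)) (hS : ContDiffOn ℝ 1 S Ω)
    (hbound : ∀ x ∈ Ω, Real.sqrt (κ1 ^ 2 - 1) * norm2 (S x) < |C|) :
    (∃ u : (Fin 2 → ℝ) → ℝ, ContDiffOn ℝ 2 u Ω ∧
        ∀ x ∈ Ω,
          (Real.sqrt (κ1 ^ 2 + (κ1 ^ 2 - 1) * norm2 (grad2 u x) ^ 2))⁻¹ • grad2 u x =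
            C⁻¹ • S x) ↔
      ∀ x ∈ Ω,
        (C ^ 2 - (κ1 ^ 2 - 1) * norm2 (S x) ^ 2) * curl2 S x =
          (κ1 ^ 2 - 1) / 2 * cross2v (S x) (grad2 (fun y => norm2 (S y) ^ 2) x) := by
  have hk : 0 ≤ κ1 ^ 2 - 1 := by nlinarith
  have hpos (p : Fin 2 → ℝ) : 0 < κ1 ^ 2 + (κ1 ^ 2 - 1) * norm2 p ^ 2 := by positivity
  have hlt : ∀ x ∈ Ω, (κ1 ^ 2 - 1) * norm2 (S x) ^ 2 < C ^ 2 := fun x hx => by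
    simpa [mul_pow, Real.sq_sqrt hk] using
      sq_lt_sq.2 ((hbound x hx).trans_le' (abs_of_nonneg (by unfold norm2; positivity)).le)
  have h := imaging_same_index_general (a := κ1 ^ 2) (by positivity) hC.ne hΩ hS hlt
  simpa only [hpos, true_and] using h
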